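/- Let ‖·‖ be a norm on ℝ^N such that h(u) := (1/2)‖u‖² is differentiable with 1-Lipschitz gradient (‖∇h(u) − ∇h(v)‖_* ≤ ‖u − v‖ for all u,v). Let X ⊆ ℝ^N be convex compact with diameter R = max_{x,x'∈X}‖x − x'‖, let p ∈ ℝ^N, and run the Frank–Wolfe iterates on D(x) = (1/2)‖x − p‖² over X with step sizes γ^t = 2/(t+1): z^t ∈ argmin_{z∈X}⟨∇D(x^t), z⟩, x^{t+1} = (1−γ^t)x^t + γ^t z^t. Then for every T ≥ 4: ‖x^T − p‖² ≤ min_{x∈X}‖x − p‖² + 8R²/T, and consequently ‖x^T − p‖ − min_{x∈X}‖x − p‖ ≤ 2√2·R/√T. -/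

import Mathlib

open scoped RealInnerProductSpace

/-!
A Lipschitz gradient bounds an objective from above by its tangent plane plus a quadratic, and
convexity bounds it from below by the tangent plane. Comparing the two at the minimizer of the
linearization gives for the gap `δ t = f (x t) - f w` the recursion
`δ (t + 1) ≤ (1 - γ) δ t + γ² C / 2` with `γ = 2 / (t + 1)`. As `γ = 1` at `t = 1`, the initial gap
is wiped out, and induction from `t = 2` gives `δ t ≤ 2 C / (t + 1)`. For the half-square of a
seminorm the bound on the unsquared distances follows from `√(b² + c) ≤ b + √c`.
-/

section Real

lemma two_div_succ_mem_Icc {t : ℕ} (ht : 1 ≤ t) : 2 / ((t : ℝ) + 1) ∈ Set.Icc (0 : ℝ) 1 := by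
  refine ⟨by positivity, (div_le_one (by positivity)).mpr ?_⟩
  exact_mod_cast (by omega : 2 ≤ t + 1)

lemma le_div_succ_of_frankWolfe_recursion {δ : ℕ → ℝ} {C : ℝ} (hC : 0 ≤ C)
    (hδ : ∀ t : ℕ, 1 ≤ t →
      δ (t + 1) ≤ (1 - 2 / ((t : ℝ) + 1)) * δ t + (2 / ((t : ℝ) + 1)) ^ 2 * (C / 2))
    {t : ℕ} (ht : 2 ≤ t) : δ t ≤ 2 * C / ((t : ℝ) + 1) := by
  induction t, ht using Nat.le_induction with
  | base =>
    have h := hδ 1 le_rfl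
    norm_num at h ⊢
    linarith
  | succ t ht ih =>
    have hγ : 0 ≤ 1 - 2 / ((t : ℝ) + 1) :=
      sub_nonneg.mpr (two_div_succ_mem_Icc (one_le_two.trans ht)).2
    have h_frac : (t : ℝ) / ((t : ℝ) + 1) ^ 2 ≤ 1 / (((t + 1 : ℕ) : ℝ) + 1) := by
      rw [div_le_div_iff₀ (by positivity) (by positivity)]
      push_cast
      linarith
    calc δ (t + 1)
        ≤ (1 - 2 / ((t : ℝ) + 1)) * (2 * C / ((t : ℝ) + 1))
            + (2 / ((t : ℝ) + 1)) ^ 2 * (C / 2) := by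
          grw [hδ t (by omega), ih]
      _ = 2 * C * (t / ((t : ℝ) + 1) ^ 2) := by field_simp; ring
      _ ≤ 2 * C * (1 / (((t + 1 : ℕ) : ℝ) + 1)) := by
          gcongr 2 * C * ?_
      _ = 2 * C / (((t + 1 : ℕ) : ℝ) + 1) := mul_one_div _ _

lemma sub_le_sqrt_of_sq_le_sq_add {a b c : ℝ} (hb : 0 ≤ b) (h : a ^ 2 ≤ b ^ 2 + c) :
    a - b ≤ √c := by
  have hc : c ≤ √c ^ 2 := Real.sq_sqrt'.symm ▸ le_max_left c 0
  have h_sq : a ^ 2 ≤ (b + √c) ^ 2 := by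
    nlinarith [mul_nonneg hb (Real.sqrt_nonneg c)]
  linarith [le_of_abs_le (abs_le_of_sq_le_sq h_sq (by positivity))]

lemma sqrt_eight_mul_sq_div {R : ℝ} (hR : 0 ≤ R) (T : ℝ) :
    √(8 * R ^ 2 / T) = 2 * √2 * R / √T := by
  rw [Real.sqrt_div (by positivity), show 8 * R ^ 2 = (2 * R) ^ 2 * 2 by ring,
    Real.sqrt_mul (by positivity), Real.sqrt_sq (by positivity)]
  ring

end Real

section LineDeriv

variable {E : Type*} [AddCommGroup E] [Module ℝ E] {f : E → ℝ}

lemma hasDerivAt_comp_add_smul {u d : E} {s f' : ℝ} (h : HasLineDerivAt ℝ f f' (u + s • d) d) :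
    HasDerivAt (fun r : ℝ => f (u + r • d)) f' s := by
  have h_shift : HasDerivAt (fun r : ℝ => f (u + s • d + r • d)) f' (s - s) := by
    rwa [sub_self]
  have h_eq : (fun r : ℝ => f (u + r • d)) = fun r => f (u + s • d + (r - s) • d) := by
    funext r
    congr 1
    module
  rw [h_eq]
  exact h_shift.comp_sub_const s s

lemma add_lineDeriv_le_of_convexOn {X : Set E} (hf : ConvexOn ℝ X f) {u w : E} (hu : u ∈ X)
    (hw : w ∈ X) {f' : ℝ} (hf' : HasLineDerivAt ℝ f f' u (w - u)) : f u + f' ≤ f w := by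
  have h_line : ConvexOn ℝ (AffineMap.lineMap u w ⁻¹' X) (f ∘ AffineMap.lineMap (k := ℝ) u w) :=
    hf.comp_affineMap (AffineMap.lineMap u w)
  have h_deriv : HasDerivAt (f ∘ AffineMap.lineMap (k := ℝ) u w) f' 0 := by
    have h : HasDerivAt (fun s : ℝ => f (u + s • (w - u))) f' 0 := hf'
    simpa only [Function.comp_def, AffineMap.lineMap_apply_module', add_comm] using h
  have h_slope := h_line.le_slope_of_hasDerivAt (by simpa using hu) (by simpa using hw)
    one_pos h_deriv
  simp only [slope_def_field, Function.comp_apply, AffineMap.lineMap_apply_one,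
    AffineMap.lineMap_apply_zero, sub_zero, div_one] at h_slope
  linarith

lemma le_add_lineDeriv_add_sq_of_lipschitz (q : Seminorm ℝ E) {X : Set E} (hX : Convex ℝ X)
    {f' : E → Module.Dual ℝ E} (hf' : ∀ u ∈ X, ∀ d, HasLineDerivAt ℝ f (f' u d) u d) {L : ℝ}
    (hLip : ∀ u ∈ X, ∀ v ∈ X, ∀ d, (f' u - f' v) d ≤ L * q (u - v) * q d)
    {u w : E} (hu : u ∈ X) (hw : w ∈ X) :
    f w ≤ f u + f' u (w - u) + L / 2 * q (w - u) ^ 2 := by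
  set d := w - u with hd
  have h_mem : ∀ s ∈ Set.Icc (0 : ℝ) 1, u + s • d ∈ X := fun s hs =>
    hX.add_smul_sub_mem hu hw hs
  have h_deriv : ∀ s ∈ Set.Icc (0 : ℝ) 1,
      HasDerivAt (fun s : ℝ => f (u + s • d)) (f' (u + s • d) d) s := fun s hs =>
    hasDerivAt_comp_add_smul (hf' _ (h_mem s hs) d)
  have h_bound_deriv : ∀ s : ℝ,
      HasDerivAt (fun s : ℝ => f u + s * f' u d + L / 2 * q d ^ 2 * s ^ 2)
        (f' u d + L * s * q d ^ 2) s := fun s => by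
    refine ((((hasDerivAt_id s).mul_const (f' u d)).const_add (f u)).add
      ((hasDerivAt_pow 2 s).const_mul (L / 2 * q d ^ 2))).congr_deriv ?_
    simp only [Nat.cast_ofNat, Nat.add_one_sub_one, pow_one]
    ring
  have h_deriv_le : ∀ s ∈ Set.Ico (0 : ℝ) 1, f' (u + s • d) d ≤ f' u d + L * s * q d ^ 2 := by
    intro s hs
    have h := hLip _ (h_mem s (Set.Ico_subset_Icc_self hs)) u hu d
    rw [add_sub_cancel_left, map_smul_eq_mul, Real.norm_of_nonneg hs.1, LinearMap.sub_apply] at h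
    linarith
  have h := image_le_of_deriv_right_le_deriv_boundary
    (fun s hs => (h_deriv s hs).continuousAt.continuousWithinAt)
    (fun s hs => (h_deriv s (Set.Ico_subset_Icc_self hs)).hasDerivWithinAt)
    (by simp) (fun s _ => (h_bound_deriv s).continuousAt.continuousWithinAt)
    (fun s _ => (h_bound_deriv s).hasDerivWithinAt) h_deriv_le
    (Set.right_mem_Icc.mpr zero_le_one)
  simpa [hd] using h

end LineDeriv

section DualNorm

variable {E : Type*} [AddCommGroup E] [Module ℝ E]

/-- The dual norm of a linear functional with respect to a seminorm. As a real supremum it takes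
the value `0` on functionals that are unbounded on the unit ball. -/
noncomputable def dualNorm (q : Seminorm ℝ E) (φ : Module.Dual ℝ E) : ℝ :=
  sSup {r : ℝ | ∃ w, q w ≤ 1 ∧ r = φ w}

lemma apply_le_dualNorm_mul {q : Seminorm ℝ E} {φ : Module.Dual ℝ E}
    (hφ : BddAbove {r : ℝ | ∃ w, q w ≤ 1 ∧ r = φ w}) (d : E) : φ d ≤ dualNorm q φ * q d := by
  -- Dividing by `c > q d` rather than by `q d` covers the case `q d = 0`.
  refine le_mul_of_forall_lt₀ fun a ha c hc => ?_
  have hc_pos : 0 < c := (apply_nonneg q d).trans_lt hc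
  have h_ball : q (c⁻¹ • d) ≤ 1 := by
    rw [map_smul_eq_mul, norm_inv, Real.norm_of_nonneg hc_pos.le, inv_mul_le_one₀ hc_pos]
    exact hc.le
  have h_le : c⁻¹ * φ d ≤ dualNorm q φ := le_csSup hφ ⟨_, h_ball, by simp⟩
  calc φ d ≤ c * dualNorm q φ := (inv_mul_le_iff₀ hc_pos).mp h_le
    _ = dualNorm q φ * c := mul_comm _ _
    _ ≤ a * c := mul_le_mul_of_nonneg_right ha.le hc_pos.le

end DualNorm

section FrankWolfe

variable {E : Type*} [AddCommGroup E] [Module ℝ E]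

/-- `x` is a sequence of Frank–Wolfe iterates over `X` with step sizes `2 / (t + 1)`, for an
objective with derivative `f'`, and `z` is the sequence of minimizers of the linearizations. Indices
start at `1`; `x 0` and `z 0` are arbitrary. -/
structure IsFrankWolfe (f' : E → Module.Dual ℝ E) (X : Set E) (x z : ℕ → E) : Prop where
  init_mem : x 1 ∈ X
  oracle_mem : ∀ t, 1 ≤ t → z t ∈ X
  oracle_isMinOn : ∀ t, 1 ≤ t → IsMinOn (f' (x t)) X (z t)
  step : ∀ t : ℕ, 1 ≤ t →
    x (t + 1) = (1 - 2 / ((t : ℝ) + 1)) • x t + (2 / ((t : ℝ) + 1)) • z t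

namespace IsFrankWolfe

variable {f : E → ℝ} {f' : E → Module.Dual ℝ E} {X : Set E} {x z : ℕ → E}

lemma step_eq_add_smul_sub (hxz : IsFrankWolfe f' X x z) {t : ℕ} (ht : 1 ≤ t) :
    x (t + 1) = x t + (2 / ((t : ℝ) + 1)) • (z t - x t) := by
  rw [hxz.step t ht]
  module

lemma mem (hxz : IsFrankWolfe f' X x z) (hX : Convex ℝ X) {t : ℕ} (ht : 1 ≤ t) : x t ∈ X := by
  induction t, ht using Nat.le_induction with
  | base => exact hxz.init_mem
  | succ t ht ih =>
    rw [hxz.step_eq_add_smul_sub ht]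
    exact hX.add_smul_sub_mem ih (hxz.oracle_mem t ht) (two_div_succ_mem_Icc ht)

/-- `h_curv` says that the curvature constant of `f` over `X`, in the sense of Jaggi, is at
most `C`. -/
theorem sub_le_of_curvature (hxz : IsFrankWolfe f' X x z) (hX : Convex ℝ X)
    (h_tangent : ∀ u ∈ X, ∀ w ∈ X, f u + f' u (w - u) ≤ f w) {C : ℝ}
    (h_curv : ∀ u ∈ X, ∀ v ∈ X, ∀ γ ∈ Set.Icc (0 : ℝ) 1,
      f (u + γ • (v - u)) ≤ f u + γ * f' u (v - u) + γ ^ 2 * (C / 2))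
    {w : E} (hw : w ∈ X) {t : ℕ} (ht : 2 ≤ t) : f (x t) - f w ≤ 2 * C / ((t : ℝ) + 1) := by
  have hC : 0 ≤ C := by
    have h := h_curv w hw w hw 1 (Set.right_mem_Icc.mpr zero_le_one)
    simp only [sub_self, smul_zero, add_zero, map_zero, mul_zero, one_pow, one_mul] at h
    linarith
  refine le_div_succ_of_frankWolfe_recursion (δ := fun t => f (x t) - f w) hC
    (fun t ht => ?_) ht
  have hxt : x t ∈ X := hxz.mem hX ht
  have hγ := two_div_succ_mem_Icc ht
  have h_step := h_curv _ hxt _ (hxz.oracle_mem t ht) _ hγ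
  rw [← hxz.step_eq_add_smul_sub ht] at h_step
  have h_oracle : f' (x t) (z t - x t) ≤ f w - f (x t) := by
    have h_min : f' (x t) (z t) ≤ f' (x t) w := hxz.oracle_isMinOn t ht hw
    have h_conv := h_tangent _ hxt w hw
    rw [map_sub] at h_conv ⊢
    linarith
  linarith [mul_le_mul_of_nonneg_left h_oracle hγ.1]

theorem sub_le_of_lipschitz (hxz : IsFrankWolfe f' X x z) (hf : ConvexOn ℝ X f)
    (hf' : ∀ u ∈ X, ∀ d, HasLineDerivAt ℝ f (f' u d) u d) (q : Seminorm ℝ E) {L : ℝ} (hL : 0 ≤ L)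
    (hLip : ∀ u ∈ X, ∀ v ∈ X, ∀ d, (f' u - f' v) d ≤ L * q (u - v) * q d)
    {R : ℝ} (hR : ∀ u ∈ X, ∀ v ∈ X, q (u - v) ≤ R)
    {w : E} (hw : w ∈ X) {t : ℕ} (ht : 2 ≤ t) :
    f (x t) - f w ≤ 2 * (L * R ^ 2) / ((t : ℝ) + 1) := by
  refine hxz.sub_le_of_curvature hf.1
    (fun u hu w hw => add_lineDeriv_le_of_convexOn hf hu hw (hf' u hu _)) ?_ hw ht
  intro u hu v hv γ hγ
  have h_descent := le_add_lineDeriv_add_sq_of_lipschitz q hf.1 hf' hLip hu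
    (hf.1.add_smul_sub_mem hu hv hγ)
  rw [add_sub_cancel_left, map_smul, smul_eq_mul, map_smul_eq_mul, Real.norm_of_nonneg hγ.1]
    at h_descent
  calc f (u + γ • (v - u))
      ≤ f u + γ * f' u (v - u) + L / 2 * (γ * q (v - u)) ^ 2 := h_descent
    _ ≤ f u + γ * f' u (v - u) + L / 2 * (γ * R) ^ 2 := by
        have := hγ.1
        gcongr
        exact hR v hv u hu
    _ = f u + γ * f' u (v - u) + γ ^ 2 * (L * R ^ 2 / 2) := by ring

end IsFrankWolfe

end FrankWolfe

section HalfSquare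

variable {E : Type*} [AddCommGroup E] [Module ℝ E] (q : Seminorm ℝ E) (p : E)

lemma convexOn_half_sq_seminorm_sub :
    ConvexOn ℝ Set.univ (fun w => (1 / 2) * q (w - p) ^ 2) := by
  have h := ((q.convexOn.translate_left (-p)).pow (fun _ _ => apply_nonneg q _) 2).smul
    (one_half_pos (α := ℝ)).le
  simpa [sub_eq_add_neg] using h

variable {q p}

lemma lineDeriv_half_sq_seminorm_sub_le {φ : Module.Dual ℝ E} {u d : E}
    (hφ : HasLineDerivAt ℝ (fun w => (1 / 2) * q (w - p) ^ 2) (φ d) u d) (hd : q d ≤ 1) :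
    φ d ≤ (1 / 2) * (q (u - p) + 1) ^ 2 := by
  have h_tangent := add_lineDeriv_le_of_convexOn (w := u + d) (convexOn_half_sq_seminorm_sub q p)
    (Set.mem_univ u) (Set.mem_univ _) (by rwa [add_sub_cancel_left])
  have h_tri : q (u + d - p) ≤ q (u - p) + 1 := by
    rw [add_sub_right_comm]
    exact (map_add_le_add q _ _).trans (by gcongr)
  calc φ d ≤ (1 / 2) * q (u + d - p) ^ 2 := by linarith [sq_nonneg (q (u - p))]
    _ ≤ (1 / 2) * (q (u - p) + 1) ^ 2 := by gcongr

/-- This makes the real supremum `dualNorm q (φ - ψ)` a genuine one. -/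
lemma bddAbove_lineDeriv_sub_of_half_sq_seminorm_sub {φ ψ : Module.Dual ℝ E} {u v : E}
    (hφ : ∀ d, HasLineDerivAt ℝ (fun w => (1 / 2) * q (w - p) ^ 2) (φ d) u d)
    (hψ : ∀ d, HasLineDerivAt ℝ (fun w => (1 / 2) * q (w - p) ^ 2) (ψ d) v d) :
    BddAbove {r : ℝ | ∃ w, q w ≤ 1 ∧ r = (φ - ψ) w} := by
  refine ⟨(1 / 2) * (q (u - p) + 1) ^ 2 + (1 / 2) * (q (v - p) + 1) ^ 2, ?_⟩
  rintro _ ⟨w, hw, rfl⟩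
  have h_u := lineDeriv_half_sq_seminorm_sub_le (hφ w) hw
  have h_v := lineDeriv_half_sq_seminorm_sub_le (hψ (-w)) (by rwa [map_neg_eq_map])
  rw [map_neg] at h_v
  rw [LinearMap.sub_apply]
  linarith

theorem frankWolfe_squared_norm_convergence_general {X : Set E} (hX : Convex ℝ X)
    {D' : E → Module.Dual ℝ E}
    (hD' : ∀ u ∈ X, ∀ d, HasLineDerivAt ℝ (fun w => (1 / 2) * q (w - p) ^ 2) (D' u d) u d)
    {L : ℝ} (hL : 0 ≤ L) (hLip : ∀ u ∈ X, ∀ v ∈ X, dualNorm q (D' u - D' v) ≤ L * q (u - v))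
    {R : ℝ} (hR : ∀ u ∈ X, ∀ v ∈ X, q (u - v) ≤ R)
    {x z : ℕ → E} (hxz : IsFrankWolfe D' X x z) {T : ℕ} (hT : 2 ≤ T) {w : E} (hw : w ∈ X) :
    q (x T - p) ^ 2 ≤ q (w - p) ^ 2 + 4 * L * R ^ 2 / ((T : ℝ) + 1)
      ∧ q (x T - p) - q (w - p) ≤ √(4 * L * R ^ 2 / ((T : ℝ) + 1)) := by
  have h_holder : ∀ u ∈ X, ∀ v ∈ X, ∀ d, (D' u - D' v) d ≤ L * q (u - v) * q d :=
    fun u hu v hv d =>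
      (apply_le_dualNorm_mul
        (bddAbove_lineDeriv_sub_of_half_sq_seminorm_sub (hD' u hu) (hD' v hv)) d).trans
        (mul_le_mul_of_nonneg_right (hLip u hu v hv) (apply_nonneg q d))
  have h_gap := hxz.sub_le_of_lipschitz
    ((convexOn_half_sq_seminorm_sub q p).subset (Set.subset_univ X) hX) hD' q hL h_holder hR hw hT
  have h_sq : q (x T - p) ^ 2 ≤ q (w - p) ^ 2 + 4 * L * R ^ 2 / ((T : ℝ) + 1) := by
    linear_combination 2 * h_gap
  exact ⟨h_sq, sub_le_sqrt_of_sq_le_sq_add (apply_nonneg q _) h_sq⟩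

end HalfSquare

section Gradient

variable {F : Type*} [NormedAddCommGroup F] [InnerProductSpace ℝ F]

lemma dualNorm_innerₗ_sub (q : Seminorm ℝ F) (a b : F) :
    dualNorm q (innerₗ F a - innerₗ F b) = sSup {r : ℝ | ∃ w, q w ≤ 1 ∧ r = ⟪w, a - b⟫} := by
  simp only [dualNorm, ← map_sub, innerₗ_apply_apply, real_inner_comm]

variable [CompleteSpace F]

lemma hasGradientAt_comp_sub_const {f : F → ℝ} {g u p : F} (hf : HasGradientAt f g (u - p)) :
    HasGradientAt (fun w => f (w - p)) g u :=
  hasGradientAt_iff_hasFDerivAt.mpr ((hasFDerivAt_comp_sub p).mpr hf.hasFDerivAt)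

end Gradient

/-- Frank–Wolfe on the squared-norm objective `D(x) = (1/2)‖x - p‖²`
(for a norm `nrm` whose half-square is differentiable with 1-Lipschitz gradient in the
dual norm) over a convex compact set of diameter `R`, with step sizes `γ^t = 2/(t+1)`,
satisfies `‖x^T - p‖² ≤ min_{x∈X} ‖x - p‖² + 8R²/T` and hence
`‖x^T - p‖ - min_{x∈X} ‖x - p‖ ≤ 2√2 R/√T` for `T ≥ 4`. -/
theorem frankWolfe_squared_norm_convergence {N : ℕ}
    (nrm : EuclideanSpace ℝ (Fin N) → ℝ)
    (hnonneg : ∀ u, 0 ≤ nrm u)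
    (hdefinite : ∀ u, nrm u = 0 → u = 0)
    (hhom : ∀ (c : ℝ) u, nrm (c • u) = |c| * nrm u)
    (htri : ∀ u v, nrm (u + v) ≤ nrm u + nrm v)
    (gradh : EuclideanSpace ℝ (Fin N) → EuclideanSpace ℝ (Fin N))
    (hgradh : ∀ u, HasGradientAt (fun w => (1 / 2) * nrm w ^ 2) (gradh u) u)
    (hLip : ∀ u v, sSup {r : ℝ | ∃ w, nrm w ≤ 1 ∧ r = ⟪w, gradh u - gradh v⟫}
      ≤ nrm (u - v))
    (X : Set (EuclideanSpace ℝ (Fin N))) (hXconv : Convex ℝ X) (hXcomp : IsCompact X)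
    (R : ℝ) (hR : IsGreatest {r : ℝ | ∃ x ∈ X, ∃ x' ∈ X, r = nrm (x - x')} R)
    (p : EuclideanSpace ℝ (Fin N))
    (gradD : EuclideanSpace ℝ (Fin N) → EuclideanSpace ℝ (Fin N))
    (hgradD : ∀ u, HasGradientAt (fun w => (1 / 2) * nrm (w - p) ^ 2) (gradD u) u)
    (x z : ℕ → EuclideanSpace ℝ (Fin N)) (hx1 : x 1 ∈ X)
    (hz : ∀ t : ℕ, 1 ≤ t → z t ∈ X ∧ ∀ w ∈ X, ⟪gradD (x t), z t⟫ ≤ ⟪gradD (x t), w⟫)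
    (hstep : ∀ t : ℕ, 1 ≤ t →
      x (t + 1) = (1 - 2 / ((t : ℝ) + 1)) • x t + (2 / ((t : ℝ) + 1)) • z t) :
    ∀ T : ℕ, 4 ≤ T → ∀ xstar ∈ X,
      nrm (x T - p) ^ 2 ≤ nrm (xstar - p) ^ 2 + 8 * R ^ 2 / (T : ℝ)
      ∧ nrm (x T - p) - nrm (xstar - p) ≤ 2 * Real.sqrt 2 * R / Real.sqrt (T : ℝ) := by
  set q : Seminorm ℝ (EuclideanSpace ℝ (Fin N)) := Seminorm.of nrm htri hhom
  have h_gradD : ∀ u, gradD u = gradh (u - p) := fun u =>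
    (hgradD u).unique (hasGradientAt_comp_sub_const (hgradh (u - p)))
  have h_lip : ∀ u v, dualNorm q (innerₗ _ (gradD u) - innerₗ _ (gradD v)) ≤ 1 * q (u - v) := by
    intro u v
    rw [dualNorm_innerₗ_sub, h_gradD, h_gradD, one_mul, ← sub_sub_sub_cancel_right u v p]
    exact hLip (u - p) (v - p)
  have h_fw : IsFrankWolfe (fun u => innerₗ _ (gradD u)) X x z :=
    ⟨hx1, fun t ht => (hz t ht).1, fun t ht => (hz t ht).2, hstep⟩
  intro T hT xstar hxstar
  obtain ⟨h_sq, h_dist⟩ := frankWolfe_squared_norm_convergence_general hXconv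
    (fun u _ d => (hgradD u).hasFDerivAt.hasLineDerivAt d) zero_le_one (fun u _ v _ => h_lip u v)
    (fun u hu v hv => hR.2 ⟨u, hu, v, hv, rfl⟩) h_fw (by omega : 2 ≤ T) hxstar
  have h_rate : 4 * 1 * R ^ 2 / ((T : ℝ) + 1) ≤ 8 * R ^ 2 / T := by
    gcongr <;> linarith
  have hR_nonneg : 0 ≤ R := (hnonneg _).trans (hR.2 ⟨x 1, hx1, x 1, hx1, rfl⟩)
  refine ⟨h_sq.trans (add_le_add_right h_rate _), h_dist.trans ?_⟩
  exact sqrt_eight_mul_sq_div hR_nonneg T ▸ Real.sqrt_le_sqrt h_rate
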